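/- arXiv:1202.5572 — 3 statements merged into one kernel-verified Lean document; each statement's English description precedes it below -/
import Mathlib

section
/- The open toric cube C = f_A((0,1)^d), for A = {a_1,...,a_n} ⊂ ℕ^d, equals E(L((-∞,0)^d) ∩ W) for some linear subspace W, where L(z) = (a_1·z,...,a_n·z) and E is the component-wise exponential; in particular, C is the image under the component-wise exponential of a relatively open convex subset of ℝ^n, and hence C is path-connected. -/
/-- The monomial map `f_A`. -/
def monomialMap {d n : ℕ} (a : Fin n → Fin d → ℕ) (t : Fin d → ℝ) : Fin n → ℝ :=
  fun i => ∏ j, t j ^ a i j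

/-- The open unit cube `(0,1)^d`. -/
def openUnitCube (d : ℕ) : Set (Fin d → ℝ) := Set.pi Set.univ fun _ => Set.Ioo (0 : ℝ) 1

/-- The open negative orthant `(-∞,0)^d`. -/
def negOrthant (d : ℕ) : Set (Fin d → ℝ) := Set.pi Set.univ fun _ => Set.Iio (0 : ℝ)

/-- The linear map `L : ℝ^d → ℝ^n`, `z ↦ (a_1 · z, ..., a_n · z)`. -/
noncomputable def dotLinearMap {d n : ℕ} (a : Fin n → Fin d → ℕ) :
    (Fin d → ℝ) →ₗ[ℝ] (Fin n → ℝ) :=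
  LinearMap.pi fun i => ∑ j, (a i j : ℝ) • LinearMap.proj j

/-- The component-wise exponential. -/
noncomputable def cwExp {n : ℕ} (z : Fin n → ℝ) : Fin n → ℝ := fun i => Real.exp (z i)

theorem cwExp_dot_eq {d n : ℕ} (a : Fin n → Fin d → ℕ) (z : Fin d → ℝ) :
    cwExp (dotLinearMap a z) = monomialMap a (fun j => Real.exp (z j)) := by
  funext i
  simp [cwExp, dotLinearMap, monomialMap, Real.exp_sum, ← Real.exp_nat_mul]

theorem toric_image_eq {d n : ℕ} (a : Fin n → Fin d → ℕ) :
    monomialMap a '' openUnitCube d = cwExp '' (dotLinearMap a '' negOrthant d) := by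
  ext x
  constructor
  · rintro ⟨t, ht, rfl⟩
    have ht' : ∀ j, 0 < t j ∧ t j < 1 := fun j => ht j (Set.mem_univ j)
    refine ⟨_, ⟨fun j => Real.log (t j), fun j _ => Real.log_neg (ht' j).1 (ht' j).2, rfl⟩, ?_⟩
    rw [cwExp_dot_eq]
    congr 1
    funext j
    exact Real.exp_log (ht' j).1
  · rintro ⟨_, ⟨z, hz, rfl⟩, rfl⟩
    refine ⟨fun j => Real.exp (z j), fun j _ => ⟨Real.exp_pos _, ?_⟩, (cwExp_dot_eq a z).symm⟩
    exact Real.exp_lt_one_iff.mpr (hz j (Set.mem_univ j))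

theorem negOrthant_convex (d : ℕ) : Convex ℝ (negOrthant d) :=
  convex_pi fun _ _ => convex_Iio 0

/-- The open toric cube `C = f_A((0,1)^d)` equals `E(L((-∞,0)^d) ∩ W)` for some linear
subspace `W`; in particular `C` is the image under the component-wise exponential of a
relatively open convex subset of `ℝ^n`, and hence `C` is path-connected. -/
theorem openToricCube_exp_of_convex {d n : ℕ} (a : Fin n → Fin d → ℕ) :
    (∃ W : Submodule ℝ (Fin n → ℝ),
      monomialMap a '' openUnitCube d =
        cwExp '' (dotLinearMap a '' negOrthant d ∩ (W : Set (Fin n → ℝ)))) ∧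
    (∃ V : Set (Fin n → ℝ), Convex ℝ V ∧
      (∃ W : Submodule ℝ (Fin n → ℝ), V ⊆ (W : Set (Fin n → ℝ)) ∧
        IsOpen (((↑) : W → (Fin n → ℝ)) ⁻¹' V)) ∧
      monomialMap a '' openUnitCube d = cwExp '' V) ∧
    IsPathConnected (monomialMap a '' openUnitCube d) := by
  have hconv : Convex ℝ (dotLinearMap a '' negOrthant d) :=
    (negOrthant_convex d).linear_image _
  refine ⟨⟨⊤, by simpa using toric_image_eq a⟩,
    ⟨_, hconv, ⟨LinearMap.range (dotLinearMap a), ?_, ?_⟩, toric_image_eq a⟩, ?_⟩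
  · rintro _ ⟨z, _, rfl⟩
    exact ⟨z, rfl⟩
  · have hopen : IsOpen (negOrthant d) :=
      isOpen_set_pi Set.finite_univ fun _ _ => isOpen_Iio
    have hmap : IsOpenMap (dotLinearMap a).rangeRestrict :=
      LinearMap.isOpenMap_of_finiteDimensional _ (LinearMap.surjective_rangeRestrict _)
    convert hmap _ hopen using 1
    ext ⟨y, hy⟩
    constructor
    · rintro ⟨z, hz, h⟩
      exact ⟨z, hz, Subtype.ext h⟩
    · rintro ⟨z, hz, h⟩
      exact ⟨z, hz, congrArg Subtype.val h⟩
  · rw [toric_image_eq]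
    have hne : (dotLinearMap a '' negOrthant d).Nonempty :=
      ⟨_, fun _ => -1, fun _ _ => by simp, rfl⟩
    refine (hconv.isPathConnected hne).image ?_
    unfold cwExp
    fun_prop
end

section
/- Let A = {a_1,...,a_n} ⊂ ℕ^d and suppose the vectors a_1,...,a_n span a k-dimensional subspace of ℝ^d... equivalently, let L(z) = (a_1·z,...,a_n·z) have rank k. Then the open toric cube C = f_A((0,1)^d) is a semi-algebraic set of dimension k. -/
open MeasureTheory

/-- Semialgebraic subsets of `ℝ^ι`: the Boolean algebra generated by sets of the form
`{x | p(x) > 0}` for real polynomials `p`. -/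
inductive IsSemialgebraic {ι : Type} [Fintype ι] : Set (ι → ℝ) → Prop
  | pos (p : MvPolynomial ι ℝ) : IsSemialgebraic {x | 0 < MvPolynomial.eval x p}
  | compl {s : Set (ι → ℝ)} : IsSemialgebraic s → IsSemialgebraic sᶜ
  | union {s t : Set (ι → ℝ)} :
      IsSemialgebraic s → IsSemialgebraic t → IsSemialgebraic (s ∪ t)

namespace ToricCube

/-- sign condition -/
def R (r : Bool) (x : ℝ) : Prop := if r then x < 0 else x ≤ 0

/-- integer halfspaces through the origin -/
def half {n : ℕ} (b : Fin n → ℤ) (r : Bool) : Set (Fin n → ℝ) :=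
  {y | R r (∑ i, (b i : ℝ) * y i)}

/-- finite intersections of integer halfspaces -/
def IsPoly {n : ℕ} (S : Set (Fin n → ℝ)) : Prop :=
  ∃ F : Finset ((Fin n → ℤ) × Bool), S = {y | ∀ c ∈ F, y ∈ half c.1 c.2}

lemma IsPoly.univ {n : ℕ} : IsPoly (Set.univ : Set (Fin n → ℝ)) := ⟨∅, by simp⟩

lemma IsPoly.half {n : ℕ} (b : Fin n → ℤ) (r : Bool) : IsPoly (half b r) :=
  ⟨{(b, r)}, by simp⟩

lemma IsPoly.iInter {n : ℕ} {ι : Type*} (s : Finset ι) (S : ι → Set (Fin n → ℝ))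
    (h : ∀ i ∈ s, IsPoly (S i)) : IsPoly {y | ∀ i ∈ s, y ∈ S i} := by
  classical
  choose! F hF using h
  refine ⟨s.biUnion F, ?_⟩
  ext y
  simp only [Set.mem_ofPred_eq, Finset.mem_biUnion]
  constructor
  · rintro h c ⟨i, hi, hc⟩
    have := h i hi
    rw [hF i hi] at this
    exact this c hc
  · intro h i hi
    rw [hF i hi]
    exact fun c hc => h c ⟨i, hi, hc⟩

lemma IsPoly.inter {n : ℕ} {S T : Set (Fin n → ℝ)} (hS : IsPoly S) (hT : IsPoly T) :
    IsPoly (S ∩ T) := by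
  have := IsPoly.iInter (Finset.univ : Finset Bool) (fun b => if b then S else T)
    (by intro b _; cases b <;> simpa)
  convert this using 1
  ext y; simp [and_comm]

lemma R.of_lt {r : Bool} {x : ℝ} (h : x < 0) : R r x := by
  cases r <;> simp [R, h, h.le]

lemma exists_pos (r : Bool) (p q : ℝ) (hq : q ≠ 0) (r' : Bool) (p' q' : ℝ)
    (hq' : 0 < q * q') : ∃ s, R r (p + s * q) ∧ R r' (p' + s * q') := by
  have key : ∃ s : ℝ, p + s * q < 0 ∧ p' + s * q' < 0 := by
    rcases lt_or_gt_of_ne hq with h | h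
    · have h' : q' < 0 := by nlinarith
      refine ⟨max (-p/q) (-p'/q') + 1, ?_, ?_⟩
      · have := le_max_left (-p/q) (-p'/q')
        have h2 : -p / q * q = -p := by field_simp
        nlinarith
      · have := le_max_right (-p/q) (-p'/q')
        have h2 : -p' / q' * q' = -p' := by have := h'.ne; field_simp
        nlinarith
    · have h' : 0 < q' := by nlinarith
      refine ⟨min (-p/q) (-p'/q') - 1, ?_, ?_⟩
      · have := min_le_left (-p/q) (-p'/q')
        have h2 : -p / q * q = -p := by field_simp
        nlinarith
      · have := min_le_right (-p/q) (-p'/q')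
        have h2 : -p' / q' * q' = -p' := by have := h'.ne'; field_simp
        nlinarith
  obtain ⟨s, h1, h2⟩ := key
  exact ⟨s, R.of_lt h1, R.of_lt h2⟩

lemma exists_opp (r : Bool) (p q : ℝ) (hq : 0 < q) (r' : Bool) (p' q' : ℝ)
    (hq' : q' < 0) : (∃ s, R r (p + s * q) ∧ R r' (p' + s * q')) ↔
      R (r || r') (q * p' - q' * p) := by
  constructor
  · rintro ⟨s, h1, h2⟩
    cases r <;> cases r' <;> simp [R] at * <;> nlinarith
  · intro h
    have e1 : p + (-p/q) * q = 0 := by field_simp; ring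
    have e2 : p' + (-p'/q') * q' = 0 := by have := hq'.ne; field_simp; ring
    have e3 : q * p' - q' * p = (-p'/q' - -p/q) * -(q * q') := by
      have := hq'.ne; field_simp; ring
    rw [e3] at h
    have hm : 0 < -(q * q') := by nlinarith
    have key : R (r || r') (-p'/q' - -p/q) := by
      revert h
      generalize (r || r') = t
      cases t
      · intro h; simp only [R] at *; simp at *; nlinarith
      · intro h; simp only [R] at *; simp at *; nlinarith
    generalize -p/q = A at *
    generalize -p'/q' = B at *
    by_cases hAB : B < A
    · refine ⟨(A + B)/2, R.of_lt ?_, R.of_lt ?_⟩ <;> nlinarith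
    · cases r <;> cases r' <;> simp [R] at *
      · exact ⟨A, by linarith, by nlinarith⟩
      all_goals linarith

/-- affine slice -/
def slice {n : ℕ} (c : (Fin n → ℤ) × ℤ × Bool) (y : Fin n → ℝ) : Set ℝ :=
  {s | R c.2.2 (∑ i, (c.1 i : ℝ) * y i + s * c.2.1)}

lemma slice_pair {n : ℕ} (c c' : (Fin n → ℤ) × ℤ × Bool) :
    IsPoly {y | (slice c y ∩ slice c' y).Nonempty} := by
  have opp : ∀ c c' : (Fin n → ℤ) × ℤ × Bool, 0 < c.2.1 → c'.2.1 < 0 →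
      IsPoly {y | (slice c y ∩ slice c' y).Nonempty} := by
    rintro ⟨b, q, r⟩ ⟨b', q', r'⟩ hq hq'
    convert IsPoly.half (fun i => q * b' i - q' * b i) (r || r') using 1
    ext y
    have := exists_opp r (∑ i, (b i : ℝ) * y i) q (by exact_mod_cast hq) r'
      (∑ i, (b' i : ℝ) * y i) q' (by exact_mod_cast hq')
    refine Iff.trans this ?_
    simp only [ToricCube.half, Set.mem_ofPred_eq]
    push_cast
    simp only [sub_mul, Finset.sum_sub_distrib, Finset.mul_sum, mul_assoc]
  have zero : ∀ c c' : (Fin n → ℤ) × ℤ × Bool, c.2.1 = 0 → c'.2.1 ≠ 0 →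
      IsPoly {y | (slice c y ∩ slice c' y).Nonempty} := by
    rintro ⟨b, q, r⟩ ⟨b', q', r'⟩ hq hq'
    simp only at hq hq'
    subst hq
    convert IsPoly.half b r using 1
    ext y
    have hq'' : (q' : ℝ) ≠ 0 := by exact_mod_cast hq'
    obtain ⟨s, hs, -⟩ := exists_pos r' (∑ i, (b' i : ℝ) * y i) q' hq'' r'
      (∑ i, (b' i : ℝ) * y i) q' (mul_self_pos.2 hq'')
    constructor
    · rintro ⟨s, h1, h2⟩
      simpa [slice, ToricCube.half] using h1
    · intro h
      exact ⟨s, by simpa [slice, ToricCube.half] using h, hs⟩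
  rcases lt_trichotomy c.2.1 0 with h | h | h <;>
  rcases lt_trichotomy c'.2.1 0 with h' | h' | h'
  · convert IsPoly.univ using 1
    refine Set.eq_univ_of_forall fun y => ?_
    exact exists_pos _ _ _ (by exact_mod_cast h.ne) _ _ _ (by exact_mod_cast mul_pos_of_neg_of_neg h h')
  · simp_rw [Set.inter_comm (slice c _)]; exact zero _ _ h' h.ne
  · simp_rw [Set.inter_comm (slice c _)]; exact opp _ _ h' h
  · exact zero _ _ h h'.ne
  · convert (IsPoly.half c.1 c.2.2).inter (IsPoly.half c'.1 c'.2.2) using 1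
    ext y
    simp [slice, h, h', ToricCube.half, Set.Nonempty]
  · exact zero _ _ h h'.ne'
  · exact opp _ _ h h'
  · simp_rw [Set.inter_comm (slice c _)]; exact zero _ _ h' h.ne'
  · convert IsPoly.univ using 1
    refine Set.eq_univ_of_forall fun y => ?_
    exact exists_pos _ _ _ (by exact_mod_cast h.ne') _ _ _ (by exact_mod_cast mul_pos h h')

lemma slice_convex {n : ℕ} (c : (Fin n → ℤ) × ℤ × Bool) (y : Fin n → ℝ) :
    Convex ℝ (slice c y) := by
  obtain ⟨b, q, r⟩ := c
  intro s hs t ht u v hu hv huv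
  simp only [slice, Set.mem_ofPred_eq, smul_eq_mul] at *
  generalize (∑ i, (b i : ℝ) * y i) = p at *
  have e : p + (u * s + v * t) * q = u * (p + s * q) + v * (p + t * q) := by
    have : p = (u + v) * p := by rw [huv, one_mul]
    linear_combination this
  rw [e]
  cases r
  · simp [R] at *
    nlinarith
  · simp [R] at *
    rcases hu.eq_or_lt with h | h
    · have : v = 1 := by linarith
      subst this; subst h; linarith
    · nlinarith

lemma slice_all {n : ℕ} (F : Finset ((Fin n → ℤ) × ℤ × Bool)) :
    IsPoly {y | ∃ s, ∀ c ∈ F, s ∈ slice c y} := by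
  classical
  convert IsPoly.iInter (F ×ˢ F) (fun c => {y | (slice c.1 y ∩ slice c.2 y).Nonempty})
    (fun c _ => slice_pair _ _) using 1
  ext y
  constructor
  · rintro ⟨s, hs⟩ c hc
    rw [Finset.mem_product] at hc
    exact ⟨s, hs _ hc.1, hs _ hc.2⟩
  · intro h
    have := Convex.helly_theorem' (𝕜 := ℝ) (F := fun c => slice c y) (s := F)
      (fun c _ => slice_convex c y) (by
        intro I hI hc
        rw [Module.finrank_self] at hc
        rcases I.eq_empty_or_nonempty with rfl | ⟨c, hcI⟩
        · simp
        have h1 : (I.erase c).card ≤ 1 := by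
          rw [Finset.card_erase_of_mem hcI]; omega
        have : ∃ c' ∈ I, ∀ e ∈ I, e = c ∨ e = c' := by
          by_cases hE : (I.erase c).Nonempty
          · obtain ⟨c', hc'⟩ := hE
            refine ⟨c', Finset.mem_of_mem_erase hc', fun e he => ?_⟩
            by_cases hec : e = c
            · exact Or.inl hec
            · exact Or.inr (Finset.card_le_one.1 h1 e (Finset.mem_erase.2 ⟨hec, he⟩) c' hc')
          · refine ⟨c, hcI, fun e he => ?_⟩
            by_contra hec
            exact hE ⟨e, Finset.mem_erase.2 ⟨fun h => hec (Or.inl h), he⟩⟩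
        obtain ⟨c', hc', hall⟩ := this
        obtain ⟨s, hs1, hs2⟩ := h (c, c') (Finset.mem_product.2 ⟨hI hcI, hI hc'⟩)
        refine ⟨s, Set.mem_iInter₂.2 fun e he => ?_⟩
        rcases hall e he with rfl | rfl
        · exact hs1
        · exact hs2)
    obtain ⟨s, hs⟩ := this
    exact ⟨s, fun c hc => Set.mem_iInter₂.1 hs c hc⟩

lemma IsPoly.add_gen {n : ℕ} {S : Set (Fin n → ℝ)} (hS : IsPoly S) (v : Fin n → ℕ) :
    IsPoly {y | ∃ s : ℝ, s < 0 ∧ y - s • (fun i => (v i : ℝ)) ∈ S} := by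
  classical
  obtain ⟨F, rfl⟩ := hS
  convert slice_all (insert (0, 1, true)
    (F.image fun c => (c.1, - ∑ i, c.1 i * (v i : ℤ), c.2))) using 1
  ext y
  simp only [Set.mem_ofPred_eq, Finset.forall_mem_insert, Finset.forall_mem_image]
  refine exists_congr fun s => and_congr (by simp [slice, R]) ?_
  refine forall₂_congr fun c hc => ?_
  simp only [ToricCube.half, slice, Set.mem_ofPred_eq]
  have : ∑ i, (c.1 i : ℝ) * (y - s • (fun i => (v i : ℝ))) i =
      ∑ i, (c.1 i : ℝ) * y i + s * ((- ∑ i, c.1 i * (v i : ℤ) : ℤ) : ℝ) := by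
    push_cast
    rw [mul_neg, Finset.mul_sum, ← sub_eq_add_neg, ← Finset.sum_sub_distrib]
    refine Finset.sum_congr rfl fun i _ => ?_
    simp; ring
  rw [this]

lemma IsPoly.zero {n : ℕ} : IsPoly ({0} : Set (Fin n → ℝ)) := by
  classical
  have := IsPoly.iInter (Finset.univ : Finset (Fin n))
    (fun i => ToricCube.half (Pi.single i 1) false ∩ ToricCube.half (Pi.single i (-1)) false)
    (fun i _ => (IsPoly.half _ _).inter (IsPoly.half _ _))
  convert this using 1
  ext y
  simp only [Set.mem_singleton_iff, funext_iff, Set.mem_ofPred_eq, ToricCube.half, R, Set.mem_inter_iff,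
    Finset.mem_univ, forall_true_left, Pi.single_apply]
  refine forall_congr' fun i => ?_
  rw [le_antisymm_iff]
  simp

lemma cone_poly {d n : ℕ} (a : Fin n → Fin d → ℕ) (J : Finset (Fin d)) :
    IsPoly {y : Fin n → ℝ | ∃ z : Fin d → ℝ, (∀ j, z j < 0) ∧
      y = ∑ j ∈ J, z j • (fun i => (a i j : ℝ))} := by
  classical
  induction J using Finset.induction_on with
  | empty =>
    convert IsPoly.zero using 1
    ext y
    simp only [Finset.sum_empty, Set.mem_ofPred_eq, Set.mem_singleton_iff]
    exact ⟨fun h => h.choose_spec.2, fun h => ⟨fun _ => -1, by simp, h⟩⟩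
  | insert j J hj ih =>
    convert ih.add_gen (fun i => a i j) using 1
    ext y
    simp only [Set.mem_ofPred_eq, Finset.sum_insert hj]
    constructor
    · rintro ⟨z, hz, rfl⟩
      exact ⟨z j, hz j, z, hz, by simp⟩
    · rintro ⟨s, hs, z, hz, h⟩
      refine ⟨Function.update z j s, fun i => ?_, ?_⟩
      · by_cases h : i = j
        · subst h; simpa
        · simpa [h] using hz i
      · rw [sub_eq_iff_eq_add'] at h
        rw [h, Function.update_self]
        congr 1
        refine Finset.sum_congr rfl fun i hi => ?_
        rw [Function.update_of_ne (by rintro rfl; exact hj hi)]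

/-- the linear map -/
noncomputable def L {d n : ℕ} (a : Fin n → Fin d → ℕ) : (Fin d → ℝ) →ₗ[ℝ] (Fin n → ℝ) :=
  (Matrix.of fun i j => (a i j : ℝ)).mulVecLin

lemma L_apply {d n : ℕ} (a : Fin n → Fin d → ℕ) (z : Fin d → ℝ) (i : Fin n) :
    L a z i = ∑ j, (a i j : ℝ) * z j := by
  simp [L, Matrix.mulVec, dotProduct]

/-- negative orthant -/
def neg (d : ℕ) : Set (Fin d → ℝ) := {z | ∀ j, z j < 0}

lemma monomialMap_exp {d n : ℕ} (a : Fin n → Fin d → ℕ) (z : Fin d → ℝ) :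
    monomialMap a (fun j => Real.exp (z j)) = fun i => Real.exp (L a z i) := by
  ext i
  simp only [monomialMap, L_apply, Real.exp_sum]
  refine Finset.prod_congr rfl fun j _ => ?_
  rw [Real.exp_nat_mul]

lemma image_eq {d n : ℕ} (a : Fin n → Fin d → ℕ) :
    monomialMap a '' openUnitCube d = (fun y i => Real.exp (y i)) '' (L a '' neg d) := by
  rw [← Set.image_comp]
  have : openUnitCube d = (fun (z : Fin d → ℝ) j => Real.exp (z j)) '' neg d := by
    ext t
    simp only [openUnitCube, Set.mem_pi, Set.mem_univ, forall_true_left, Set.mem_Ioo, neg]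
    constructor
    · intro h
      exact ⟨fun j => Real.log (t j), fun j => Real.log_neg (h j).1 (h j).2,
        funext fun j => Real.exp_log (h j).1⟩
    · rintro ⟨z, hz, rfl⟩ j
      exact ⟨Real.exp_pos _, Real.exp_lt_one_iff.2 (hz j)⟩
  rw [this, ← Set.image_comp]
  refine Set.image_congr fun z _ => ?_
  exact monomialMap_exp a z

lemma image_poly {d n : ℕ} (a : Fin n → Fin d → ℕ) : IsPoly (L a '' neg d) := by
  convert cone_poly a Finset.univ using 1
  ext y
  simp only [Set.mem_image, neg, Set.mem_ofPred_eq]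
  refine exists_congr fun z => and_congr Iff.rfl ?_
  rw [eq_comm]
  have : L a z = ∑ j, z j • (fun i => (a i j : ℝ)) := by
    ext i
    simp [L_apply, mul_comm]
  rw [this]

lemma sa_inter {n : ℕ} {s t : Set (Fin n → ℝ)} (hs : IsSemialgebraic s)
    (ht : IsSemialgebraic t) : IsSemialgebraic (s ∩ t) := by
  have := (hs.compl.union ht.compl).compl
  rwa [← Set.compl_inter, compl_compl] at this

lemma sa_univ {n : ℕ} : IsSemialgebraic (Set.univ : Set (Fin n → ℝ)) := by
  convert IsSemialgebraic.pos (ι := Fin n) 1 using 1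
  simp

lemma sa_all {n : ℕ} {ι : Type*} (s : Finset ι) (S : ι → Set (Fin n → ℝ))
    (h : ∀ i ∈ s, IsSemialgebraic (S i)) : IsSemialgebraic {y | ∀ i ∈ s, y ∈ S i} := by
  classical
  induction s using Finset.induction_on with
  | empty => simpa using sa_univ
  | insert j J hj ih =>
    have := sa_inter (h j (by simp)) (ih fun i hi => h i (by simp [hi]))
    convert this using 1
    ext y
    simp

lemma sa_pos {n : ℕ} : IsSemialgebraic {x : Fin n → ℝ | ∀ i, 0 < x i} := by
  have := sa_all (Finset.univ : Finset (Fin n)) (fun i => {x | 0 < x i}) (by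
    intro i _
    convert IsSemialgebraic.pos (MvPolynomial.X i : MvPolynomial (Fin n) ℝ) using 1
    simp)
  simpa using this

lemma sa_half {n : ℕ} (b : Fin n → ℤ) (r : Bool) :
    IsSemialgebraic {x : Fin n → ℝ | (∀ i, 0 < x i) ∧ (fun i => Real.log (x i)) ∈ half b r} := by
  let P : MvPolynomial (Fin n) ℝ := ∏ i, MvPolynomial.X i ^ (b i).toNat
  let Q : MvPolynomial (Fin n) ℝ := ∏ i, MvPolynomial.X i ^ (-b i).toNat
  have key : ∀ x : Fin n → ℝ, (∀ i, 0 < x i) →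
      0 < MvPolynomial.eval x P ∧ 0 < MvPolynomial.eval x Q ∧ ∑ i, (b i : ℝ) * Real.log (x i) =
      Real.log (MvPolynomial.eval x P) - Real.log (MvPolynomial.eval x Q) := by
    intro x hx
    have e1 : MvPolynomial.eval x P = ∏ i, x i ^ (b i).toNat := by simp [P, map_prod]
    have e2 : MvPolynomial.eval x Q = ∏ i, x i ^ (-b i).toNat := by simp [Q, map_prod]
    rw [e1, e2]
    refine ⟨Finset.prod_pos fun i _ => pow_pos (hx i) _,
      Finset.prod_pos fun i _ => pow_pos (hx i) _, ?_⟩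
    rw [Real.log_prod (fun i _ => (pow_pos (hx i) _).ne'),
      Real.log_prod (fun i _ => (pow_pos (hx i) _).ne'), ← Finset.sum_sub_distrib]
    refine Finset.sum_congr rfl fun i _ => ?_
    rw [Real.log_pow, Real.log_pow, ← sub_mul]
    congr 1
    have : b i = ((b i).toNat : ℤ) - ((-b i).toNat : ℤ) := by omega
    exact_mod_cast congrArg (fun z : ℤ => (z : ℝ)) this
  cases r
  · convert sa_inter sa_pos (IsSemialgebraic.pos (P - Q)).compl using 1
    ext x
    refine and_congr_right fun hx => ?_
    obtain ⟨h1, h2, h3⟩ := key x hx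
    simp only [half, R, Set.mem_ofPred_eq, h3, Set.mem_compl_iff, map_sub]
    simp [Real.log_le_log_iff h1 h2]
  · convert sa_inter sa_pos (IsSemialgebraic.pos (Q - P)) using 1
    ext x
    refine and_congr_right fun hx => ?_
    obtain ⟨h1, h2, h3⟩ := key x hx
    simp only [half, R, Set.mem_ofPred_eq, h3, map_sub]
    simp [Real.log_lt_log_iff h1 h2]

lemma sa_exp {n : ℕ} {S : Set (Fin n → ℝ)} (hS : IsPoly S) :
    IsSemialgebraic ((fun y i => Real.exp (y i)) '' S) := by
  obtain ⟨F, rfl⟩ := hS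
  convert sa_inter sa_pos (sa_all F _ fun c _ => sa_half c.1 c.2) using 1
  ext x
  constructor
  · rintro ⟨y, hy, rfl⟩
    exact ⟨fun i => Real.exp_pos _, fun c hc => ⟨fun i => Real.exp_pos _, by simpa using hy c hc⟩⟩
  · rintro ⟨hx, h⟩
    exact ⟨fun i => Real.log (x i), fun c hc => (h c hc).2, funext fun i => Real.exp_log (hx i)⟩

lemma finrank_range {d n : ℕ} (a : Fin n → Fin d → ℕ) :
    Module.finrank ℝ (LinearMap.range (L a)) =
    Module.finrank ℝ (Submodule.span ℝ (Set.range fun i => fun j => (a i j : ℝ))) :=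
  Matrix.rank_eq_finrank_span_row (Matrix.of fun i j => (a i j : ℝ))

lemma isOpen_neg (d : ℕ) : IsOpen (neg d) := by
  have : neg d = ⋂ j, {z | z j < 0} := by ext; simp [neg]
  rw [this]
  exact isOpen_iInter_of_finite fun j => isOpen_lt (continuous_apply j) continuous_const

lemma dim_cone {d n : ℕ} (a : Fin n → Fin d → ℕ) :
    dimH (L a '' neg d) = Module.finrank ℝ (LinearMap.range (L a)) := by
  have e : L a '' neg d = Subtype.val '' ((L a).rangeRestrict '' neg d) := by
    rw [← Set.image_comp]; rfl
  rw [e, Isometry.dimH_image isometry_subtype_coe]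
  apply Real.dimH_of_nonempty_interior
  have ho : IsOpen ((L a).rangeRestrict '' neg d) := by
    have : IsOpenMap (L a).rangeRestrict :=
      LinearMap.isOpenMap_of_finiteDimensional _ (L a).surjective_rangeRestrict
    exact this _ (isOpen_neg d)
  rw [ho.interior_eq]
  exact ⟨_, Set.mem_image_of_mem _ (show (fun _ => -1) ∈ neg d from fun j => by norm_num)⟩

lemma dim_eq {d n : ℕ} (a : Fin n → Fin d → ℕ) :
    dimH ((fun y i => Real.exp (y i)) '' (L a '' neg d)) =
      Module.finrank ℝ (LinearMap.range (L a)) := by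
  apply le_antisymm
  · have h : ContDiff ℝ 1 (fun (y : LinearMap.range (L a)) (i : Fin n) => Real.exp (y.1 i)) := by
      rw [contDiff_pi]
      intro i
      apply Real.contDiff_exp.comp
      exact (contDiff_apply ℝ ℝ i).comp (LinearMap.range (L a)).subtypeL.contDiff
    refine le_trans (dimH_mono ?_) h.dimH_range_le
    rintro _ ⟨_, ⟨z, hz, rfl⟩, rfl⟩
    exact ⟨⟨L a z, z, rfl⟩, rfl⟩
  · rw [← dim_cone]
    set C := (fun (y : Fin n → ℝ) i => Real.exp (y i)) '' (L a '' neg d) with hC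
    have e : L a '' neg d = (fun (x : Fin n → ℝ) i => Real.log (x i)) '' C := by
      rw [hC, ← Set.image_comp]
      simp
    rw [e]
    have hd : ContDiffOn ℝ 1 (fun (x : Fin n → ℝ) i => Real.log (x i)) {x | ∀ i, 0 < x i} := by
      rw [contDiffOn_pi]
      intro i
      exact (contDiff_apply ℝ ℝ i).contDiffOn.log fun x hx => (hx i).ne'
    refine hd.dimH_image_le ?_ ?_
    · intro x hx y hy u v hu hv huv i
      exact (convex_Ioi (0 : ℝ)) (hx i) (hy i) hu hv huv
    · rintro _ ⟨y, -, rfl⟩ i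
      exact Real.exp_pos _

end ToricCube

/-- If the exponent vectors `a_1, ..., a_n` span a `k`-dimensional subspace of `ℝ^d`
(equivalently, the linear map `L` has rank `k`), then the open toric cube
`C = f_A((0,1)^d)` is a semialgebraic set of dimension `k`. -/
theorem openToricCube_semialgebraic_dim {d n k : ℕ} (a : Fin n → Fin d → ℕ)
    (hspan : Module.finrank ℝ
      (Submodule.span ℝ (Set.range fun i => fun j => (a i j : ℝ))) = k) :
    IsSemialgebraic (monomialMap a '' openUnitCube d) ∧
    dimH (monomialMap a '' openUnitCube d) = k := by
  rw [ToricCube.image_eq]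
  refine ⟨ToricCube.sa_exp (ToricCube.image_poly a), ?_⟩
  rw [ToricCube.dim_eq, ToricCube.finrank_range, hspan]
end

section
/- Let A = {a_1,...,a_n} ⊂ ℕ^d with all a_i ∈ ℕ^d. Then the open toric cube C = f_A((0,1)^d) with dim(C) = k is semi-algebraically homeomorphic to the open cube (0,1)^k. -/
open MeasureTheory

theorem fm_between (L U : Finset ℝ) (h : ∀ l ∈ L, ∀ u ∈ U, l ≤ u) :
    ∃ t : ℝ, (∀ l ∈ L, l ≤ t) ∧ ∀ u ∈ U, t ≤ u := by
  by_cases hL : L.Nonempty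
  · exact ⟨L.max' hL, fun l hl => L.le_max' l hl, fun u hu => h _ (L.max'_mem hL) u hu⟩
  · rw [Finset.not_nonempty_iff_eq_empty] at hL
    subst hL
    by_cases hU : U.Nonempty
    · exact ⟨U.min' hU, by simp, fun u hu => U.min'_le u hu⟩
    · rw [Finset.not_nonempty_iff_eq_empty] at hU
      subst hU
      exact ⟨0, by simp, by simp⟩

theorem fm_one {ι : Type} [Fintype ι] (M : Finset ((ι → ℤ) × ℤ)) :
    ∃ M' : Finset (ι → ℤ), ∀ x : ι → ℝ,
      (∃ t : ℝ, ∀ p ∈ M, 0 ≤ ∑ i, (p.1 i : ℝ) * x i + p.2 * t) ↔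
        ∀ c ∈ M', 0 ≤ ∑ i, (c i : ℝ) * x i := by
  classical
  refine ⟨(M.filter fun p => p.2 = 0).image Prod.fst ∪
    ((M.filter fun p => 0 < p.2) ×ˢ (M.filter fun p => p.2 < 0)).image
      (fun q => fun i => q.1.2 * q.2.1 i - q.2.2 * q.1.1 i), fun x => ?_⟩
  have key : ∀ p q : (ι → ℤ) × ℤ,
      ∑ i, ((p.2 * q.1 i - q.2 * p.1 i : ℤ) : ℝ) * x i =
        p.2 * ∑ i, (q.1 i : ℝ) * x i - q.2 * ∑ i, (p.1 i : ℝ) * x i := by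
    intro p q
    rw [Finset.mul_sum, Finset.mul_sum, ← Finset.sum_sub_distrib]
    refine Finset.sum_congr rfl fun i _ => ?_
    push_cast
    ring
  constructor
  · rintro ⟨t, ht⟩ c hc
    rw [Finset.mem_union, Finset.mem_image, Finset.mem_image] at hc
    rcases hc with ⟨p, hp, rfl⟩ | ⟨⟨p, q⟩, hpq, rfl⟩
    · rw [Finset.mem_filter] at hp
      have := ht p hp.1
      rw [hp.2] at this
      simpa using this
    · rw [Finset.mem_product, Finset.mem_filter, Finset.mem_filter] at hpq
      obtain ⟨⟨hp, hp0⟩, hq, hq0⟩ := hpq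
      have h1 := ht p hp
      have h2 := ht q hq
      have e1 : (0 : ℝ) < p.2 := by exact_mod_cast hp0
      have e2 : (q.2 : ℝ) < 0 := by exact_mod_cast hq0
      simp only [key]
      nlinarith [mul_nonneg e1.le h2, mul_nonneg (neg_pos.2 e2).le h1]
  · intro h
    obtain ⟨t, hl, hu⟩ := fm_between
      ((M.filter fun p => 0 < p.2).image fun p => -(∑ i, (p.1 i : ℝ) * x i) / p.2)
      ((M.filter fun p => p.2 < 0).image fun p => (∑ i, (p.1 i : ℝ) * x i) / (-p.2)) (by
        intro l hl u hu
        rw [Finset.mem_image] at hl hu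
        obtain ⟨p, hp, rfl⟩ := hl
        obtain ⟨q, hq, rfl⟩ := hu
        have h1 := h _ (Finset.mem_union_right _ (Finset.mem_image_of_mem _
          (Finset.mem_product.2 ⟨(show (p, q).1 ∈ _ from hp), hq⟩)))
        simp only [key] at h1
        rw [Finset.mem_filter] at hp hq
        have e1 : (0 : ℝ) < p.2 := by exact_mod_cast hp.2
        have e2 : (0 : ℝ) < -q.2 := by
          have : (q.2 : ℝ) < 0 := by exact_mod_cast hq.2
          linarith
        rw [div_le_div_iff₀ e1 e2]
        linarith)
    refine ⟨t, fun p hp => ?_⟩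
    rcases lt_trichotomy p.2 0 with h0 | h0 | h0
    · have := hu _ (Finset.mem_image_of_mem _ (Finset.mem_filter.2 ⟨hp, h0⟩))
      have e2 : (0 : ℝ) < -p.2 := by
        have : (p.2 : ℝ) < 0 := by exact_mod_cast h0
        linarith
      rw [le_div_iff₀ e2] at this
      linarith
    · have := h p.1 (Finset.mem_union_left _ (Finset.mem_image_of_mem _
        (Finset.mem_filter.2 ⟨hp, h0⟩)))
      rw [h0]
      simpa using this
    · have := hl _ (Finset.mem_image_of_mem _ (Finset.mem_filter.2 ⟨hp, h0⟩))
      have e2 : (0 : ℝ) < p.2 := by exact_mod_cast h0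
      rw [div_le_iff₀ e2] at this
      linarith

theorem fm_many {ι : Type} [Fintype ι] : ∀ (d : ℕ) (M : Finset ((ι → ℤ) × (Fin d → ℤ))),
    ∃ M' : Finset (ι → ℤ), ∀ x : ι → ℝ,
      (∃ t : Fin d → ℝ, ∀ p ∈ M, 0 ≤ ∑ i, (p.1 i : ℝ) * x i + ∑ j, (p.2 j : ℝ) * t j) ↔
        ∀ c ∈ M', 0 ≤ ∑ i, (c i : ℝ) * x i := by
  classical
  intro d
  induction d with
  | zero =>
    intro M
    refine ⟨M.image Prod.fst, fun x => ?_⟩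
    constructor
    · rintro ⟨t, ht⟩ c hc
      rw [Finset.mem_image] at hc
      obtain ⟨p, hp, rfl⟩ := hc
      simpa using ht p hp
    · intro h
      refine ⟨fun _ => 0, fun p hp => ?_⟩
      simpa using h _ (Finset.mem_image_of_mem _ hp)
  | succ d ih =>
    intro M
    obtain ⟨M1, h1⟩ := fm_one (ι := ι ⊕ Fin d)
      (M.image fun p => (Sum.elim p.1 (fun j => p.2 j.succ), p.2 0))
    obtain ⟨M2, h2⟩ := ih (M1.image fun c => (fun i => c (Sum.inl i), fun j => c (Sum.inr j)))
    refine ⟨M2, fun x => ?_⟩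
    rw [← h2]
    constructor
    · rintro ⟨t, ht⟩
      refine ⟨fun j => t j.succ, fun q hq => ?_⟩
      rw [Finset.mem_image] at hq
      obtain ⟨c, hc, rfl⟩ := hq
      have := (h1 (Sum.elim x fun j => t j.succ)).1 ⟨t 0, fun q hq => by
        rw [Finset.mem_image] at hq
        obtain ⟨p, hp, rfl⟩ := hq
        have := ht p hp
        rw [Fin.sum_univ_succ] at this
        simp only [Fintype.sum_sum_type, Sum.elim_inl, Sum.elim_inr]
        linarith⟩ c hc
      simpa only [Fintype.sum_sum_type, Sum.elim_inl, Sum.elim_inr] using this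
    · rintro ⟨t, ht⟩
      obtain ⟨t0, ht0⟩ := (h1 (Sum.elim x t)).2 (by
        intro c hc
        simpa only [Fintype.sum_sum_type, Sum.elim_inl, Sum.elim_inr] using
          ht _ (Finset.mem_image_of_mem _ hc))
      refine ⟨Fin.cons t0 t, fun p hp => ?_⟩
      have := ht0 _ (Finset.mem_image_of_mem _ hp)
      simp only [Fintype.sum_sum_type, Sum.elim_inl, Sum.elim_inr] at this
      rw [Fin.sum_univ_succ]
      simp only [Fin.cons_zero, Fin.cons_succ]
      linarith

theorem fm_feas {d n : ℕ} (a : Fin n → Fin d → ℕ) :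
    ∃ M : Finset (Option (Fin n) → ℤ), ∀ (x : Fin n → ℝ) (r : ℝ),
      (∃ t : Fin d → ℝ, (∀ i, x i = ∑ j, (a i j : ℝ) * t j) ∧ ∀ j, r ≤ t j) ↔
        ∀ c ∈ M, 0 ≤ (c none : ℝ) * r + ∑ i, (c (some i) : ℝ) * x i := by
  classical
  obtain ⟨M, hM⟩ := fm_many (ι := Option (Fin n)) d
    ((Finset.univ.image fun i : Fin n =>
        ((Pi.single (some i) 1 : Option (Fin n) → ℤ), fun j => -(a i j : ℤ))) ∪
     (Finset.univ.image fun i : Fin n =>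
        ((Pi.single (some i) (-1) : Option (Fin n) → ℤ), fun j => (a i j : ℤ))) ∪
     (Finset.univ.image fun j : Fin d =>
        ((Pi.single none (-1) : Option (Fin n) → ℤ), (Pi.single j 1 : Fin d → ℤ))))
  refine ⟨M, fun x r => ?_⟩
  have := hM (fun o => o.elim r x)
  simp only [Fintype.sum_option, Option.elim] at this
  rw [← this]
  refine exists_congr fun t => ?_
  simp only [Finset.mem_union, Finset.mem_image, Finset.mem_univ, true_and, or_imp, forall_and,
    forall_exists_index, forall_apply_eq_imp_iff]
  simp only [Pi.single_apply]
  simp only [reduceCtorEq, Option.some.injEq, if_true, if_false]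
  simp [Finset.sum_neg_distrib]
  rw [← forall_and]
  intro _
  exact forall_congr' fun i => ⟨fun h => by constructor <;> linarith, fun h => by linarith [h.1, h.2]⟩

theorem IsSemialgebraic.inter' {ι : Type} [Fintype ι] {s t : Set (ι → ℝ)}
    (hs : IsSemialgebraic s) (ht : IsSemialgebraic t) : IsSemialgebraic (s ∩ t) := by
  have := (hs.compl.union ht.compl).compl
  rwa [Set.compl_union, compl_compl, compl_compl] at this

theorem IsSemialgebraic.univ' {ι : Type} [Fintype ι] :
    IsSemialgebraic (Set.univ : Set (ι → ℝ)) := by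
  have := IsSemialgebraic.pos (1 : MvPolynomial ι ℝ)
  simpa using this

theorem IsSemialgebraic.empty' {ι : Type} [Fintype ι] :
    IsSemialgebraic (∅ : Set (ι → ℝ)) := by
  simpa using (IsSemialgebraic.univ' (ι := ι)).compl

theorem IsSemialgebraic.forall_finset {ι κ : Type} [Fintype ι] (M : Finset κ)
    (P : κ → (ι → ℝ) → Prop) (h : ∀ c ∈ M, IsSemialgebraic {z | P c z}) :
    IsSemialgebraic {z | ∀ c ∈ M, P c z} := by
  classical
  induction M using Finset.induction_on with
  | empty => simpa using IsSemialgebraic.univ'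
  | insert c M hc ih =>
    have := (h c (Finset.mem_insert_self _ _)).inter'
      (ih fun c hc => h c (Finset.mem_insert_of_mem hc))
    simpa [Set.ofPred_and, Finset.forall_mem_insert] using this

theorem IsSemialgebraic.exists_finset {ι κ : Type} [Fintype ι] (M : Finset κ)
    (P : κ → (ι → ℝ) → Prop) (h : ∀ c ∈ M, IsSemialgebraic {z | P c z}) :
    IsSemialgebraic {z | ∃ c ∈ M, P c z} := by
  have := (IsSemialgebraic.forall_finset M (fun c z => ¬ P c z)
    (fun c hc => by simpa [Set.compl_ofPred] using (h c hc).compl)).compl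
  simpa [Set.compl_ofPred] using this

theorem IsSemialgebraic.le' {ι : Type} [Fintype ι] (p q : MvPolynomial ι ℝ) :
    IsSemialgebraic {z | MvPolynomial.eval z p ≤ MvPolynomial.eval z q} := by
  have := (IsSemialgebraic.pos (p - q)).compl
  simpa [Set.compl_ofPred] using this

theorem IsSemialgebraic.log_sum {ι κ : Type} [Fintype ι] [Fintype κ]
    (p : κ → MvPolynomial ι ℝ) (c : κ → ℤ) :
    IsSemialgebraic {z | (∀ i, 0 < MvPolynomial.eval z (p i)) ∧
      0 ≤ ∑ i, (c i : ℝ) * Real.log (MvPolynomial.eval z (p i))} := by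
  have h1 : IsSemialgebraic {z | ∀ i ∈ (Finset.univ : Finset κ), 0 < MvPolynomial.eval z (p i)} :=
    IsSemialgebraic.forall_finset _ _ fun i _ => IsSemialgebraic.pos (p i)
  have h2 := IsSemialgebraic.le' (∏ i, p i ^ (-c i).toNat) (∏ i, p i ^ (c i).toNat)
  convert h1.inter' h2 using 1
  ext z
  simp only [Set.mem_ofPred_eq, Set.mem_inter_iff, Finset.mem_univ, true_imp_iff]
  refine and_congr_right fun hz => ?_
  simp only [map_prod, map_pow]
  rw [← Real.log_le_log_iff (Finset.prod_pos fun i _ => pow_pos (hz i) _)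
    (Finset.prod_pos fun i _ => pow_pos (hz i) _),
    Real.log_prod (fun i _ => (pow_pos (hz i) _).ne'),
    Real.log_prod (fun i _ => (pow_pos (hz i) _).ne')]
  have : ∀ i, (c i : ℝ) = ((c i).toNat : ℝ) - ((-c i).toNat : ℝ) := by
    intro i
    have := Int.toNat_sub_toNat_neg (c i)
    exact_mod_cast this.symm
  simp only [Real.log_pow, this, sub_mul, Finset.sum_sub_distrib, sub_nonneg]

noncomputable def toricLin {d n : ℕ} (a : Fin n → Fin d → ℕ) :
    (Fin d → ℝ) →ₗ[ℝ] (Fin n → ℝ) :=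
  (Matrix.of fun i j => (a i j : ℝ)).mulVecLin

theorem toricLin_apply {d n : ℕ} (a : Fin n → Fin d → ℕ) (t : Fin d → ℝ) (i : Fin n) :
    toricLin a t i = ∑ j, (a i j : ℝ) * t j := by
  simp [toricLin, Matrix.mulVec, dotProduct]

def toricCone {d n : ℕ} (a : Fin n → Fin d → ℕ) : Set (Fin n → ℝ) :=
  toricLin a '' {t | ∀ j, 0 < t j}

theorem mem_toricCube {d n : ℕ} (a : Fin n → Fin d → ℕ) (y : Fin n → ℝ) :
    y ∈ monomialMap a '' openUnitCube d ↔
      (∀ i, 0 < y i) ∧ (fun i => -Real.log (y i)) ∈ toricCone a := by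
  constructor
  · rintro ⟨t, ht, rfl⟩
    have ht' : ∀ j, 0 < t j ∧ t j < 1 := fun j => ht j trivial
    refine ⟨fun i => Finset.prod_pos fun j _ => pow_pos (ht' j).1 _,
      fun j => -Real.log (t j), fun j => ?_, ?_⟩
    · have := Real.log_neg (ht' j).1 (ht' j).2
      simpa using this
    · ext i
      rw [toricLin_apply]
      simp only [monomialMap]
      rw [Real.log_prod (fun j _ => (pow_pos (ht' j).1 _).ne')]
      simp [Real.log_pow]
  · rintro ⟨hy, t, ht, hty⟩
    refine ⟨fun j => Real.exp (-t j), fun j _ => ⟨Real.exp_pos _, ?_⟩, ?_⟩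
    · have := ht j
      simpa using this
    · ext i
      have := congrFun hty i
      rw [toricLin_apply] at this
      simp only [monomialMap]
      rw [← Real.exp_log (hy i), ← neg_neg (Real.log (y i)), ← this, ← Finset.sum_neg_distrib,
        Real.exp_sum]
      refine Finset.prod_congr rfl fun j _ => ?_
      rw [← Real.exp_nat_mul]
      ring_nf

theorem dimH_toricCube {d n : ℕ} (a : Fin n → Fin d → ℕ) :
    dimH (monomialMap a '' openUnitCube d) = Module.finrank ℝ (LinearMap.range (toricLin a)) := by
  set V := LinearMap.range (toricLin a)
  set L := (toricLin a).rangeRestrict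
  set U : Set V := L '' {t | ∀ j, 0 < t j} with hU
  have hpos : IsOpen {t : Fin d → ℝ | ∀ j, 0 < t j} := by
    simp only [Set.ofPred_forall]
    exact isOpen_iInter_of_finite fun j => isOpen_lt continuous_const (continuous_apply j)
  have hUo : IsOpen U := by
    have := (LinearMap.toContinuousLinearMap L).isOpenMap (LinearMap.surjective_rangeRestrict _)
    exact this _ hpos
  have hUn : U.Nonempty := ⟨_, _, (fun _ => one_pos : (fun _ => 1 : Fin d → ℝ) ∈ _), rfl⟩
  have hdU : dimH U = Module.finrank ℝ V :=
    Real.dimH_of_nonempty_interior (by rwa [hUo.interior_eq])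
  have hUK : ∀ v : V, v ∈ U ↔ (v : Fin n → ℝ) ∈ toricCone a := by
    intro v
    constructor
    · rintro ⟨t, ht, rfl⟩
      exact ⟨t, ht, rfl⟩
    · rintro ⟨t, ht, h⟩
      exact ⟨t, ht, Subtype.ext h⟩
  rw [← hdU]
  apply le_antisymm
  · have : monomialMap a '' openUnitCube d =
      (fun v : V => fun i => Real.exp (-(V.subtypeL v) i)) '' U := by
      ext y
      rw [mem_toricCube]
      constructor
      · rintro ⟨hy, h⟩
        have hv : (fun i => -Real.log (y i)) ∈ V := by
          obtain ⟨t, -, h⟩ := h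
          exact ⟨t, h⟩
        refine ⟨⟨_, hv⟩, (hUK _).2 h, ?_⟩
        ext i
        simp [Real.exp_log (hy i)]
      · rintro ⟨v, hv, rfl⟩
        refine ⟨fun i => Real.exp_pos _, ?_⟩
        simpa using (hUK v).1 hv
    rw [this]
    refine ContDiffOn.dimH_image_le (s := Set.univ) ?_ convex_univ (Set.subset_univ _)
    refine ContDiff.contDiffOn ?_
    rw [contDiff_pi]
    intro i
    have h := (ContinuousLinearMap.proj (R := ℝ) (φ := fun _ : Fin n => ℝ) i).comp V.subtypeL
    have : ContDiff ℝ 1 (fun v : V => (V.subtypeL v) i) :=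
      ((ContinuousLinearMap.proj (R := ℝ) (φ := fun _ : Fin n => ℝ) i).comp V.subtypeL).contDiff
    exact this.neg.exp
  · obtain ⟨P, hP⟩ := LinearMap.exists_leftInverse_of_injective V.subtype
      (LinearMap.ker_eq_bot.2 V.subtype_injective)
    have : U = (fun y : Fin n → ℝ => LinearMap.toContinuousLinearMap P (fun i => -Real.log (y i))) ''
        (monomialMap a '' openUnitCube d) := by
      have hP' : ∀ v : V, P v = v := fun v => LinearMap.congr_fun hP v
      ext v
      constructor
      · intro hv
        refine ⟨fun i => Real.exp (-(v : Fin n → ℝ) i), ?_, ?_⟩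
        · rw [mem_toricCube]
          refine ⟨fun i => Real.exp_pos _, ?_⟩
          simpa using (hUK v).1 hv
        · simp [hP']
      · rintro ⟨y, hy, rfl⟩
        rw [mem_toricCube] at hy
        obtain ⟨t, ht, h⟩ := hy.2
        rw [hUK]
        simp only [← h]
        have := hP' (L t)
        have e : ((L t : V) : Fin n → ℝ) = toricLin a t := rfl
        rw [e] at this
        simp only [LinearMap.coe_toContinuousLinearMap', this]
        exact ⟨t, ht, rfl⟩
    rw [this]
    refine ContDiffOn.dimH_image_le (s := Set.pi Set.univ fun _ => Set.Ioi (0 : ℝ)) ?_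
      (convex_pi fun _ _ => convex_Ioi 0) ?_
    · refine ContDiff.comp_contDiffOn (ContinuousLinearMap.contDiff _) ?_
      rw [contDiffOn_pi]
      intro i
      refine ContDiffOn.neg (ContDiffOn.log ?_ ?_)
      · exact (contDiff_apply ℝ ℝ i).contDiffOn
      · intro y hy
        exact (show (0 : ℝ) < y i from hy i trivial).ne'
    · intro y hy i _
      exact ((mem_toricCube a y).1 hy).1 i

theorem exists_coord_inj {n m : ℕ} (W : Submodule ℝ (Fin n → ℝ)) (hm : Module.finrank ℝ W = m) :
    ∃ s : Fin m → Fin n, ∀ w ∈ W, (∀ j, w (s j) = 0) → w = 0 := by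
  classical
  let φ : Fin n → Module.Dual ℝ W := fun i => (LinearMap.proj i).comp W.subtype
  obtain ⟨κ, s, hs, hspan, hli⟩ := exists_linearIndependent' ℝ φ
  have : Finite κ := Finite.of_injective s hs
  have : Fintype κ := Fintype.ofFinite κ
  have hinj : ∀ w : W, (∀ j, w.1 (s j) = 0) → w = 0 := by
    intro w hw
    have hle : Submodule.span ℝ (Set.range (φ ∘ s)) ≤
        LinearMap.ker (Module.Dual.eval ℝ W w) := by
      rw [Submodule.span_le]
      rintro _ ⟨j, rfl⟩
      exact hw j
    rw [hspan] at hle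
    ext i
    have : φ i ∈ LinearMap.ker (Module.Dual.eval ℝ W w) :=
      hle (Submodule.subset_span ⟨i, rfl⟩)
    exact this
  have h1 : Fintype.card κ ≤ m := by
    have := hli.fintype_card_le_finrank
    rwa [Subspace.dual_finrank_eq, hm] at this
  have h2 : m ≤ Fintype.card κ := by
    let T : W →ₗ[ℝ] (κ → ℝ) := LinearMap.pi fun j => φ (s j)
    have hT : Function.Injective T := by
      rw [← LinearMap.ker_eq_bot, LinearMap.ker_eq_bot']
      intro w hw
      exact hinj w fun j => congrFun hw j
    have := LinearMap.finrank_le_finrank_of_injective hT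
    rwa [hm, Module.finrank_fintype_fun_eq_card] at this
  obtain ⟨eq⟩ := Fintype.card_eq.1 ((Fintype.card_fin m).trans (le_antisymm h2 h1))
  refine ⟨fun j => s (eq j), fun w hw h => ?_⟩
  have := hinj ⟨w, hw⟩ fun j => by simpa using h (eq.symm j)
  exact congrArg Subtype.val this

theorem toric_log {d n m : ℕ} (a : Fin n → Fin d → ℕ)
    (hm : Module.finrank ℝ (LinearMap.range (toricLin a)) = m + 1) :
    ∃ (ρ : (Fin n → ℝ) → ℝ) (l : Fin m → Fin n → ℤ) (G : (Fin m → ℝ) × ℝ → (Fin n → ℝ))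
      (M : Finset (Option (Fin n) → ℤ)),
      Continuous ρ ∧ Continuous G ∧
      (∀ x ∈ toricCone a, 0 < ρ x ∧ G (fun j => ∑ i, (l j i : ℝ) * x i, ρ x) = x) ∧
      (∀ h r, 0 < r → G (h, r) ∈ toricCone a ∧ (∀ j, ∑ i, (l j i : ℝ) * G (h, r) i = h j) ∧
        ρ (G (h, r)) = r) ∧
      (∀ x r, (x ∈ toricCone a ∧ r = ρ x) ↔
        0 < r ∧ (∀ c ∈ M, 0 ≤ (c none : ℝ) * r + ∑ i, (c (some i) : ℝ) * x i) ∧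
          ∃ c ∈ M, c none ≠ 0 ∧ (c none : ℝ) * r + ∑ i, (c (some i) : ℝ) * x i ≤ 0) := by
  classical
  set V := LinearMap.range (toricLin a) with hV
  obtain ⟨M, hM⟩ := fm_feas a
  have hM' : ∀ x r, (∃ t : Fin d → ℝ, toricLin a t = x ∧ ∀ j, r ≤ t j) ↔
      ∀ c ∈ M, 0 ≤ (c none : ℝ) * r + ∑ i, (c (some i) : ℝ) * x i := by
    intro x r
    rw [← hM]
    refine exists_congr fun t => and_congr_left fun _ => ?_
    rw [funext_iff]
    refine forall_congr' fun i => ?_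
    rw [toricLin_apply, eq_comm]
  set e := toricLin a (fun _ => 1) with he
  have heV : e ∈ V := ⟨_, rfl⟩
  -- nonzero entry
  obtain ⟨i0, j0, ha⟩ : ∃ i0 j0, a i0 j0 ≠ 0 := by
    by_contra! hcon
    have : V = ⊥ := by
      rw [hV, LinearMap.range_eq_bot]
      ext t i
      simp [toricLin_apply, hcon]
    rw [this, finrank_bot] at hm
    omega
  have he_apply : ∀ i, e i = ((∑ j, (a i j : ℤ) : ℤ) : ℝ) := by
    intro i
    rw [he, toricLin_apply]
    push_cast
    simp
  have ha' : (0 : ℝ) < a i0 j0 := by exact_mod_cast Nat.pos_of_ne_zero ha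
  have hpos_i0 : ∀ t : Fin d → ℝ, (∀ j, 0 < t j) → 0 < toricLin a t i0 := by
    intro t ht
    rw [toricLin_apply]
    exact Finset.sum_pos' (fun j _ => mul_nonneg (Nat.cast_nonneg _) (ht j).le)
      ⟨j0, Finset.mem_univ _, mul_pos ha' (ht j0)⟩
  have he0 : 0 < e i0 := hpos_i0 _ fun _ => one_pos
  -- signs
  have hb : ∀ c ∈ M, c none ≤ 0 := by
    intro c hc
    have := (hM' 0 (-1)).1 ⟨0, map_zero _, fun j => by norm_num⟩ c hc
    have h2 : (c none : ℝ) ≤ 0 := by simpa using this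
    exact_mod_cast h2
  set N := M.filter fun c => c none < 0 with hN
  have hNn : N.Nonempty := by
    by_contra hcon
    rw [Finset.not_nonempty_iff_eq_empty] at hcon
    have : ∃ t : Fin d → ℝ, toricLin a t = 0 ∧ ∀ j, 1 ≤ t j := by
      rw [hM']
      intro c hc
      have h1 := hb c hc
      have h2 : ¬ c none < 0 := fun h => by
        have : c ∈ N := Finset.mem_filter.2 ⟨hc, h⟩
        rw [hcon] at this
        simp at this
      have h3 : c none = 0 := by omega
      simp [h3]
    obtain ⟨t, ht, ht1⟩ := this
    have := hpos_i0 t fun j => lt_of_lt_of_le one_pos (ht1 j)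
    rw [ht] at this
    simp at this
  set ρ : (Fin n → ℝ) → ℝ := fun x =>
    N.inf' hNn fun c => (∑ i, (c (some i) : ℝ) * x i) / (-(c none : ℝ)) with hρ
  have hρc : Continuous ρ := by
    refine Continuous.finset_inf'_apply hNn fun c _ => ?_
    fun_prop
  have hle : ∀ x r, r ≤ ρ x ↔
      ∀ c ∈ N, 0 ≤ (c none : ℝ) * r + ∑ i, (c (some i) : ℝ) * x i := by
    intro x r
    rw [hρ, Finset.le_inf'_iff]
    refine forall₂_congr fun c hc => ?_
    have : (0 : ℝ) < -(c none : ℝ) := by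
      have : (c none : ℝ) < 0 := by exact_mod_cast (Finset.mem_filter.1 hc).2
      linarith
    rw [le_div_iff₀ this]
    constructor <;> intro h <;> linarith
  have hfeas_V : ∀ x ∈ V, ∃ t : Fin d → ℝ, ∃ r, toricLin a t = x ∧ ∀ j, r ≤ t j := by
    rintro x ⟨t, rfl⟩
    refine ⟨t, -∑ j, |t j|, rfl, fun j => ?_⟩
    have := Finset.single_le_sum (f := fun j => |t j|) (fun j _ => abs_nonneg _)
      (Finset.mem_univ j)
    have h2 := neg_abs_le (t j)
    linarith
  have hle' : ∀ x ∈ V, ∀ r, r ≤ ρ x ↔ ∃ t : Fin d → ℝ, toricLin a t = x ∧ ∀ j, r ≤ t j := by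
    intro x hx r
    rw [hle, hM']
    refine ⟨fun h c hc => ?_, fun h c hc => h c (Finset.mem_filter.1 hc).1⟩
    rcases (hb c hc).lt_or_eq with h0 | h0
    · exact h c (Finset.mem_filter.2 ⟨hc, h0⟩)
    · obtain ⟨t, r', h1, h2⟩ := hfeas_V x hx
      have := (hM' x r').1 ⟨t, h1, h2⟩ c hc
      simpa [h0] using this
  have hcone : ∀ x, x ∈ toricCone a ↔ x ∈ V ∧ 0 < ρ x := by
    intro x
    constructor
    · rintro ⟨t, ht, rfl⟩
      have hx : toricLin a t ∈ V := ⟨t, rfl⟩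
      refine ⟨hx, ?_⟩
      have : Nonempty (Fin d) := ⟨j0⟩
      obtain ⟨j1, hj1⟩ := Finite.exists_min t
      exact lt_of_lt_of_le (ht j1) ((hle' _ hx _).2 ⟨t, rfl, hj1⟩)
    · rintro ⟨hx, h⟩
      obtain ⟨t, h1, h2⟩ := (hle' x hx _).1 le_rfl
      exact ⟨t, fun j => lt_of_lt_of_le h (h2 j), h1⟩
  have hshift : ∀ x ∈ V, ∀ s : ℝ, ρ (x + s • e) = ρ x + s := by
    have h1 : ∀ x ∈ V, ∀ s : ℝ, ρ x + s ≤ ρ (x + s • e) := by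
      intro x hx s
      rw [hle' _ (V.add_mem hx (V.smul_mem s heV))]
      obtain ⟨t, h1, h2⟩ := (hle' x hx _).1 le_rfl
      refine ⟨t + s • fun _ => 1, by rw [map_add, map_smul, h1], fun j => ?_⟩
      have := h2 j
      simp
      linarith
    intro x hx s
    refine le_antisymm ?_ (h1 x hx s)
    have := h1 (x + s • e) (V.add_mem hx (V.smul_mem s heV)) (-s)
    rw [neg_smul, add_neg_cancel_right] at this
    linarith
  -- the linear part
  let Λ : (Fin n → ℝ) →ₗ[ℝ] (Fin n → ℝ) :=
    e i0 • LinearMap.id - (LinearMap.proj i0 : (Fin n → ℝ) →ₗ[ℝ] ℝ).smulRight e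
  have hΛ : ∀ x i, Λ x i = e i0 * x i - x i0 * e i := by
    intro x i
    simp [Λ]
  have hΛker : ∀ x, Λ x = 0 → x = (x i0 / e i0) • e := by
    intro x hx
    ext i
    have := congrFun hx i
    rw [hΛ] at this
    simp at this ⊢
    field_simp
    linarith
  have hΛe : Λ e = 0 := by
    ext i
    rw [hΛ]
    simp
  have hker : Module.finrank ℝ (LinearMap.ker (Λ.domRestrict V)) = 1 := by
    have : LinearMap.ker (Λ.domRestrict V) = Submodule.span ℝ {(⟨e, heV⟩ : V)} := by
      ext v
      rw [Submodule.mem_span_singleton, LinearMap.mem_ker, LinearMap.domRestrict_apply]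
      constructor
      · intro h
        exact ⟨_, Subtype.ext (hΛker _ h).symm⟩
      · rintro ⟨s, rfl⟩
        simp [hΛe]
    rw [this, finrank_span_singleton]
    intro h
    have : e = 0 := congrArg Subtype.val h
    rw [this] at he0
    simp at he0
  have hW : Module.finrank ℝ (LinearMap.range (Λ.domRestrict V)) = m := by
    have := LinearMap.finrank_range_add_finrank_ker (Λ.domRestrict V)
    omega
  obtain ⟨s, hs⟩ := exists_coord_inj _ hW
  let T : LinearMap.range (Λ.domRestrict V) →ₗ[ℝ] (Fin m → ℝ) :=
    (LinearMap.funLeft ℝ ℝ s).comp (Submodule.subtype _)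
  have hTi : Function.Injective T := by
    rw [← LinearMap.ker_eq_bot, LinearMap.ker_eq_bot']
    intro w hw
    exact Subtype.ext (hs w.1 w.2 fun j => congrFun hw j)
  have hTs : Function.Surjective T :=
    (LinearMap.injective_iff_surjective_of_finrank_eq_finrank (by simp [hW])).1 hTi
  obtain ⟨σ, hσ⟩ := LinearMap.exists_rightInverse_of_surjective
    (T.comp (Λ.domRestrict V).rangeRestrict)
    (LinearMap.range_eq_top.2 (hTs.comp (LinearMap.surjective_rangeRestrict _)))
  have hσ' : ∀ h j, Λ (σ h) (s j) = h j := fun h j => congrFun (LinearMap.congr_fun hσ h) j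
  let l : Fin m → Fin n → ℤ := fun j i =>
    (∑ j', (a i0 j' : ℤ)) * (if i = s j then 1 else 0) -
      (∑ j', (a (s j) j' : ℤ)) * (if i = i0 then 1 else 0)
  have hl : ∀ x j, ∑ i, (l j i : ℝ) * x i = Λ x (s j) := by
    intro x j
    rw [hΛ, he_apply, he_apply]
    simp only [l]
    push_cast
    simp only [sub_mul, Finset.sum_sub_distrib, mul_assoc, ← Finset.mul_sum]
    simp
    ring
  have hlV : ∀ v ∈ V, (∀ j, Λ v (s j) = 0) → v = (v i0 / e i0) • e := by
    intro v hv h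
    exact hΛker v (hs (Λ v) ⟨⟨v, hv⟩, rfl⟩ h)
  have hσc : Continuous fun h => (σ h : Fin n → ℝ) :=
    (V.subtype.comp σ).continuous_of_finiteDimensional
  refine ⟨ρ, l, fun p => (σ p.1 : Fin n → ℝ) + (p.2 - ρ (σ p.1)) • e, M, hρc, ?_, ?_, ?_, ?_⟩
  · have h1 : Continuous fun p : (Fin m → ℝ) × ℝ => (σ p.1 : Fin n → ℝ) :=
      hσc.comp continuous_fst
    have h2 := hρc.comp h1
    exact h1.add ((continuous_snd.sub h2).smul continuous_const)
  · intro x hx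
    rw [hcone] at hx
    refine ⟨hx.2, ?_⟩
    simp only [hl]
    set h : Fin m → ℝ := fun j => Λ x (s j) with hh
    have h1 := hlV (x - σ h) (V.sub_mem hx.1 (σ h).2) fun j => by
      rw [map_sub, Pi.sub_apply, hσ']
      simp [hh]
    set u := (x - σ h) i0 / e i0
    have h2 : x = σ h + u • e := by
      rw [← h1]
      abel
    have h3 : ρ x = ρ (σ h) + u := by
      conv_lhs => rw [h2]
      exact hshift _ (σ h).2 u
    rw [h3, add_sub_cancel_left, ← h2]
  · intro h r hr
    have h3 : ρ ((σ h : Fin n → ℝ) + (r - ρ (σ h)) • e) = r := by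
      rw [hshift _ (σ h).2]
      ring
    refine ⟨?_, ?_, h3⟩
    · rw [hcone]
      exact ⟨V.add_mem (σ h).2 (V.smul_mem _ heV), by simpa only [h3] using hr⟩
    · intro j
      rw [hl, map_add, map_smul, hΛe, smul_zero, add_zero, hσ']
  · intro x r
    constructor
    · rintro ⟨hx, rfl⟩
      rw [hcone] at hx
      refine ⟨hx.2, (hM' _ _).1 ((hle' x hx.1 _).1 le_rfl), ?_⟩
      obtain ⟨c, hc, hcx⟩ := Finset.exists_mem_eq_inf' hNn
        fun c => (∑ i, (c (some i) : ℝ) * x i) / (-(c none : ℝ))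
      rw [hN, Finset.mem_filter] at hc
      have hc0 : (c none : ℝ) < 0 := by exact_mod_cast hc.2
      refine ⟨c, hc.1, hc.2.ne, ?_⟩
      have : ρ x = (∑ i, (c (some i) : ℝ) * x i) / (-(c none : ℝ)) := hcx
      rw [this, div_neg, mul_neg, mul_div_cancel₀ _ hc0.ne]
      linarith
    · rintro ⟨hr, h1, c, hc, hc0, hcx⟩
      obtain ⟨t, ht, htr⟩ := (hM' x r).2 h1
      have hx : x ∈ V := ⟨t, ht⟩
      have h2 : r ≤ ρ x := (hle' x hx r).2 ⟨t, ht, htr⟩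
      refine ⟨(hcone x).2 ⟨hx, hr.trans_le h2⟩, le_antisymm h2 ?_⟩
      have hneg : c none < 0 := lt_of_le_of_ne (hb c hc) hc0
      have hneg' : (c none : ℝ) < 0 := by exact_mod_cast hneg
      have h3 := (hle x (ρ x)).1 le_rfl c (Finset.mem_filter.2 ⟨hc, hneg⟩)
      by_contra hcon
      push Not at hcon
      nlinarith

theorem toric_zero {d n : ℕ} (a : Fin n → Fin d → ℕ)
    (hk : Module.finrank ℝ (LinearMap.range (toricLin a)) = 0) :
    ∃ (f : (Fin n → ℝ) → (Fin 0 → ℝ)) (g : (Fin 0 → ℝ) → (Fin n → ℝ)),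
      ContinuousOn f (monomialMap a '' openUnitCube d) ∧
      ContinuousOn g (openUnitCube 0) ∧
      f '' (monomialMap a '' openUnitCube d) = openUnitCube 0 ∧
      g '' openUnitCube 0 = monomialMap a '' openUnitCube d ∧
      (∀ x ∈ monomialMap a '' openUnitCube d, g (f x) = x) ∧
      (∀ y ∈ openUnitCube 0, f (g y) = y) ∧
      IsSemialgebraic {z : (Fin n ⊕ Fin 0) → ℝ |
        (fun i => z (Sum.inl i)) ∈ monomialMap a '' openUnitCube d ∧
        (fun j => z (Sum.inr j)) = f (fun i => z (Sum.inl i))} := by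
  classical
  have hC : monomialMap a '' openUnitCube d = {fun _ => 1} := by
    have h0 : toricLin a = 0 := by
      rw [← LinearMap.range_eq_bot]
      exact Submodule.finrank_eq_zero.1 hk
    ext y
    rw [mem_toricCube, Set.mem_singleton_iff]
    have hK : toricCone a = {0} := by
      ext x
      simp only [toricCone, h0, Set.mem_image, Set.mem_singleton_iff]
      constructor
      · rintro ⟨t, -, rfl⟩
        rfl
      · rintro rfl
        exact ⟨fun _ => 1, fun _ => one_pos, rfl⟩
    rw [hK, Set.mem_singleton_iff]
    constructor
    · rintro ⟨h1, h2⟩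
      ext i
      have := congrFun h2 i
      simp only [Pi.zero_apply, neg_eq_zero] at this
      exact Real.eq_one_of_pos_of_log_eq_zero (h1 i) this
    · rintro rfl
      refine ⟨fun _ => one_pos, ?_⟩
      ext i
      simp
  have h0 : openUnitCube 0 = {fun _ => 0} := by
    ext y
    rw [Set.mem_singleton_iff]
    exact ⟨fun _ => Subsingleton.elim _ _, fun _ i => i.elim0⟩
  rw [hC, h0]
  refine ⟨fun _ _ => 0, fun _ _ => 1, continuousOn_const, continuousOn_const, by simp, by simp,
    ?_, fun y _ => Subsingleton.elim _ _, ?_⟩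
  · rintro x rfl
    rfl
  · have := IsSemialgebraic.forall_finset (ι := Fin n ⊕ Fin 0) (Finset.univ : Finset (Fin n))
      (fun i z => z (Sum.inl i) = 1) fun i _ => by
        have h1 := IsSemialgebraic.le' (ι := Fin n ⊕ Fin 0) (MvPolynomial.X (Sum.inl i)) 1
        have h2 := IsSemialgebraic.le' (ι := Fin n ⊕ Fin 0) 1 (MvPolynomial.X (Sum.inl i))
        convert h1.inter' h2 using 1
        ext z
        simp [le_antisymm_iff]
    convert this using 1
    ext z
    simp only [Set.mem_ofPred_eq, Set.mem_singleton_iff, Finset.mem_univ, true_imp_iff,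
      funext_iff]
    exact ⟨fun h => h.1, fun h => ⟨h, fun i => i.elim0⟩⟩

theorem sigmoid_iff {w u : ℝ} (h0 : 0 < w) (h1 : w < 1) :
    w = Real.sigmoid u ↔ Real.log w - Real.log (1 - w) = u := by
  have hs : ∀ u, Real.log (Real.sigmoid u) - Real.log (1 - Real.sigmoid u) = u := by
    intro u
    have e1 := Real.sigmoid_pos u
    have e2 : 0 < 1 - Real.sigmoid u := sub_pos.2 (Real.sigmoid_lt_one u)
    have e3 : Real.sigmoid u / (1 - Real.sigmoid u) = Real.exp u := by
      have e4 := Real.exp_pos u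
      rw [div_eq_iff e2.ne', Real.sigmoid_def, Real.exp_neg]
      field_simp
      ring
    rw [← Real.log_div e1.ne' e2.ne', e3, Real.log_exp]
  constructor
  · rintro rfl
    exact hs u
  · rintro rfl
    have e2 : 0 < 1 - w := sub_pos.2 h1
    rw [Real.sigmoid_def, neg_sub, Real.exp_sub, Real.exp_log h0, Real.exp_log e2]
    field_simp
    ring

theorem toric_succ {d n m : ℕ} (a : Fin n → Fin d → ℕ)
    (hk : Module.finrank ℝ (LinearMap.range (toricLin a)) = m + 1) :
    ∃ (f : (Fin n → ℝ) → (Fin (m + 1) → ℝ)) (g : (Fin (m + 1) → ℝ) → (Fin n → ℝ)),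
      ContinuousOn f (monomialMap a '' openUnitCube d) ∧
      ContinuousOn g (openUnitCube (m + 1)) ∧
      f '' (monomialMap a '' openUnitCube d) = openUnitCube (m + 1) ∧
      g '' openUnitCube (m + 1) = monomialMap a '' openUnitCube d ∧
      (∀ x ∈ monomialMap a '' openUnitCube d, g (f x) = x) ∧
      (∀ y ∈ openUnitCube (m + 1), f (g y) = y) ∧
      IsSemialgebraic {z : (Fin n ⊕ Fin (m + 1)) → ℝ |
        (fun i => z (Sum.inl i)) ∈ monomialMap a '' openUnitCube d ∧
        (fun j => z (Sum.inr j)) = f (fun i => z (Sum.inl i))} := by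
  classical
  obtain ⟨ρ, l, G, M, hρ, hG, hGρ, hρG, hgr⟩ := toric_log a hk
  set C := monomialMap a '' openUnitCube d with hC
  have hCm : ∀ y, y ∈ C ↔ (∀ i, 0 < y i) ∧ (fun i => -Real.log (y i)) ∈ toricCone a :=
    mem_toricCube a
  set X : (Fin n → ℝ) → (Fin n → ℝ) := fun y i => -Real.log (y i) with hX
  set f : (Fin n → ℝ) → (Fin (m + 1) → ℝ) := fun y =>
    Fin.cons (Real.exp (-ρ (X y))) (fun j => Real.sigmoid (∑ i, (l j i : ℝ) * X y i)) with hf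
  set H : (Fin (m + 1) → ℝ) → (Fin m → ℝ) × ℝ := fun z =>
    (fun j => Real.log (z j.succ) - Real.log (1 - z j.succ), -Real.log (z 0)) with hH
  set g : (Fin (m + 1) → ℝ) → (Fin n → ℝ) := fun z i => Real.exp (-G (H z) i) with hg
  have hXc : ContinuousOn X C := by
    rw [continuousOn_pi]
    intro i
    exact ((continuous_apply i).continuousOn.log fun y hy => (((hCm y).1 hy).1 i).ne').neg
  have hcube : ∀ z : Fin (m + 1) → ℝ, z ∈ openUnitCube (m + 1) ↔ ∀ j, 0 < z j ∧ z j < 1 :=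
    fun z => ⟨fun h j => h j trivial, fun h j _ => h j⟩
  have hfm : ∀ y ∈ C, f y ∈ openUnitCube (m + 1) := by
    intro y hy
    rw [hcube]
    intro j
    have h1 := (hGρ _ ((hCm y).1 hy).2).1
    refine Fin.cases ?_ (fun j => ?_) j
    · simp only [hf, Fin.cons_zero]
      exact ⟨Real.exp_pos _, by simpa using h1⟩
    · simp only [hf, Fin.cons_succ]
      exact ⟨Real.sigmoid_pos _, Real.sigmoid_lt_one _⟩
  have hHpos : ∀ z ∈ openUnitCube (m + 1), 0 < (H z).2 := by
    intro z hz
    rw [hcube] at hz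
    exact neg_pos.2 (Real.log_neg (hz 0).1 (hz 0).2)
  have hXg : ∀ z, X (g z) = G (H z) := by
    intro z
    ext i
    simp [hX, hg]
  have hgm : ∀ z ∈ openUnitCube (m + 1), g z ∈ C := by
    intro z hz
    rw [hCm]
    refine ⟨fun i => Real.exp_pos _, ?_⟩
    change X (g z) ∈ _
    rw [hXg]
    exact (hρG _ _ (hHpos z hz)).1
  have hgf : ∀ y ∈ C, g (f y) = y := by
    intro y hy
    have h1 := (hGρ _ ((hCm y).1 hy).2).2
    have h2 : H (f y) = (fun j => ∑ i, (l j i : ℝ) * X y i, ρ (X y)) := by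
      simp only [hH, hf, Fin.cons_zero, Fin.cons_succ, Real.log_exp, neg_neg]
      congr 1
      ext j
      exact (sigmoid_iff (Real.sigmoid_pos _) (Real.sigmoid_lt_one _)).1 rfl
    ext i
    simp only [hg]
    rw [h2, h1, neg_neg, Real.exp_log (((hCm y).1 hy).1 i)]
  have hfg : ∀ z ∈ openUnitCube (m + 1), f (g z) = z := by
    intro z hz
    obtain ⟨-, h1, h2⟩ := hρG (H z).1 (H z).2 (hHpos z hz)
    rw [hcube] at hz
    ext j
    refine Fin.cases ?_ (fun j => ?_) j
    · simp only [hf, Fin.cons_zero, hXg]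
      rw [h2]
      simp only [hH, neg_neg]
      exact Real.exp_log (hz 0).1
    · simp only [hf, Fin.cons_succ, hXg]
      rw [h1]
      exact ((sigmoid_iff (hz _).1 (hz _).2).2 rfl).symm
  refine ⟨f, g, ?_, ?_, ?_, ?_, hgf, hfg, ?_⟩
  · rw [continuousOn_pi]
    intro j
    refine Fin.cases ?_ (fun j => ?_) j
    · simp only [hf, Fin.cons_zero]
      exact (hρ.comp_continuousOn hXc).neg.rexp
    · simp only [hf, Fin.cons_succ]
      have : Continuous fun x : Fin n → ℝ => Real.sigmoid (∑ i, (l j i : ℝ) * x i) :=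
        continuous_sigmoid.comp (by fun_prop)
      exact this.comp_continuousOn hXc
  · have hHc : ContinuousOn H (openUnitCube (m + 1)) := by
      refine ContinuousOn.prodMk ?_ ?_
      · rw [continuousOn_pi]
        intro j
        refine ContinuousOn.sub (ContinuousOn.log (by fun_prop) ?_)
          (ContinuousOn.log (by fun_prop) ?_)
        · intro z hz
          exact ((hcube z).1 hz _).1.ne'
        · intro z hz
          exact (sub_pos.2 ((hcube z).1 hz _).2).ne'
      · refine ContinuousOn.neg (ContinuousOn.log (by fun_prop) ?_)
        intro z hz
        exact ((hcube z).1 hz _).1.ne'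
    rw [continuousOn_pi]
    intro i
    exact (((continuous_apply i).comp hG).comp_continuousOn hHc).neg.rexp
  · refine Set.Subset.antisymm ?_ fun z hz => ⟨g z, hgm z hz, hfg z hz⟩
    rintro _ ⟨y, hy, rfl⟩
    exact hfm y hy
  · refine Set.Subset.antisymm ?_ fun y hy => ⟨f y, hfm y hy, hgf y hy⟩
    rintro _ ⟨z, hz, rfl⟩
    exact hgm z hz
  · -- semialgebraicity of the graph
    let p : Fin n ⊕ (Fin (m + 1) ⊕ Fin (m + 1)) → MvPolynomial (Fin n ⊕ Fin (m + 1)) ℝ :=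
      Sum.elim (fun i => MvPolynomial.X (Sum.inl i))
        (Sum.elim (fun j => MvPolynomial.X (Sum.inr j)) (fun j => 1 - MvPolynomial.X (Sum.inr j)))
    let D : (Fin n ⊕ Fin (m + 1) → ℝ) → Prop := fun z =>
      (∀ i, 0 < z (Sum.inl i)) ∧ ∀ j, 0 < z (Sum.inr j) ∧ z (Sum.inr j) < 1
    have hD : ∀ z, (∀ i, 0 < MvPolynomial.eval z (p i)) ↔ D z := by
      intro z
      simp [p, D, forall_and]
    have hsum : ∀ (u : Fin n → ℤ) (v w : Fin (m + 1) → ℤ) z,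
        ∑ i, ((Sum.elim u (Sum.elim v w) i : ℤ) : ℝ) * Real.log (MvPolynomial.eval z (p i)) =
          ∑ i, (u i : ℝ) * Real.log (z (Sum.inl i)) +
          (∑ j, (v j : ℝ) * Real.log (z (Sum.inr j)) +
            ∑ j, (w j : ℝ) * Real.log (1 - z (Sum.inr j))) := by
      intro u v w z
      simp [p, Fintype.sum_sum_type]
    have hSA : ∀ (u : Fin n → ℤ) (v w : Fin (m + 1) → ℤ),
        IsSemialgebraic {z : Fin n ⊕ Fin (m + 1) → ℝ | D z ∧
          0 ≤ ∑ i, (u i : ℝ) * Real.log (z (Sum.inl i)) +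
          (∑ j, (v j : ℝ) * Real.log (z (Sum.inr j)) +
            ∑ j, (w j : ℝ) * Real.log (1 - z (Sum.inr j)))} := by
      intro u v w
      have := IsSemialgebraic.log_sum p (Sum.elim u (Sum.elim v w))
      simpa only [hD, hsum] using this
    let x : (Fin n ⊕ Fin (m + 1) → ℝ) → (Fin n → ℝ) := fun z => X fun i => z (Sum.inl i)
    let r : (Fin n ⊕ Fin (m + 1) → ℝ) → ℝ := fun z => -Real.log (z (Sum.inr 0))
    have hD0 : IsSemialgebraic {z | D z} := by
      simpa using hSA 0 0 0
    have hA : ∀ (c0 : ℤ) (c : Fin n → ℤ),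
        IsSemialgebraic {z | D z ∧ 0 ≤ (c0 : ℝ) * r z + ∑ i, (c i : ℝ) * x z i} := by
      intro c0 c
      convert hSA (fun i => -c i) (Pi.single 0 (-c0)) 0 using 1
      ext z
      refine and_congr_right fun _ => ?_
      simp only [x, r, hX, Pi.single_apply]
      simp
      constructor <;> intro h <;> linarith
    have hA' : ∀ (c0 : ℤ) (c : Fin n → ℤ),
        IsSemialgebraic {z | D z ∧ (c0 : ℝ) * r z + ∑ i, (c i : ℝ) * x z i ≤ 0} := by
      intro c0 c
      convert hA (-c0) (fun i => -c i) using 1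
      ext z
      refine and_congr_right fun _ => ?_
      simp only [Int.cast_neg, neg_mul, Finset.sum_neg_distrib]
      constructor <;> intro h <;> linarith
    have hB : ∀ j : Fin m, IsSemialgebraic {z | D z ∧
        Real.log (z (Sum.inr j.succ)) - Real.log (1 - z (Sum.inr j.succ)) =
          ∑ i, (l j i : ℝ) * x z i} := by
      intro j
      convert (hSA (fun i => l j i) (Pi.single j.succ 1) (Pi.single j.succ (-1))).inter'
        (hSA (fun i => -l j i) (Pi.single j.succ (-1)) (Pi.single j.succ 1)) using 1
      ext z
      simp only [Set.mem_inter_iff, Set.mem_ofPred_eq, ← and_and_left]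
      refine and_congr_right fun _ => ?_
      simp only [x, hX, Pi.single_apply]
      simp
      constructor
      · intro h
        constructor <;> linarith
      · rintro ⟨h1, h2⟩
        linarith
    have h1 := IsSemialgebraic.forall_finset M
      (fun c z => D z ∧ 0 ≤ (c none : ℝ) * r z + ∑ i, (c (some i) : ℝ) * x z i)
      fun c _ => hA (c none) fun i => c (some i)
    have h2 := IsSemialgebraic.exists_finset (M.filter fun c => c none ≠ 0)
      (fun c z => D z ∧ (c none : ℝ) * r z + ∑ i, (c (some i) : ℝ) * x z i ≤ 0)
      fun c _ => hA' (c none) fun i => c (some i)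
    have h3 := IsSemialgebraic.forall_finset (Finset.univ : Finset (Fin m)) (fun j z => D z ∧
        Real.log (z (Sum.inr j.succ)) - Real.log (1 - z (Sum.inr j.succ)) =
          ∑ i, (l j i : ℝ) * x z i) fun j _ => hB j
    convert hD0.inter' (h1.inter' (h2.inter' h3)) using 1
    ext z
    simp only [Set.mem_inter_iff, Set.mem_ofPred_eq, Finset.mem_filter, Finset.mem_univ,
      true_imp_iff]
    constructor
    · rintro ⟨hy, hz⟩
      have hc := hfm _ hy
      rw [← hz, hcube] at hc
      have hDz : D z := ⟨((hCm _).1 hy).1, hc⟩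
      have hr : r z = ρ (x z) := by
        have := congrFun hz 0
        simp only [hf, Fin.cons_zero] at this
        simp only [r, this, Real.log_exp, neg_neg]
        rfl
      obtain ⟨-, g1, c, hcM, hc0, hcle⟩ := (hgr (x z) (r z)).1 ⟨((hCm _).1 hy).2, hr⟩
      refine ⟨hDz, fun c hc => ⟨hDz, g1 c hc⟩, ⟨c, ⟨hcM, hc0⟩, hDz, hcle⟩, fun j => ⟨hDz, ?_⟩⟩
      have := congrFun hz j.succ
      simp only [hf, Fin.cons_succ] at this
      exact (sigmoid_iff (hDz.2 _).1 (hDz.2 _).2).1 this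
    · rintro ⟨hDz, g1, ⟨c, ⟨hcM, hc0⟩, -, hcle⟩, g3⟩
      have hrpos : 0 < r z := neg_pos.2 (Real.log_neg (hDz.2 0).1 (hDz.2 0).2)
      obtain ⟨hx, hr⟩ := (hgr (x z) (r z)).2
        ⟨hrpos, fun c hc => (g1 c hc).2, c, hcM, hc0, hcle⟩
      refine ⟨(hCm _).2 ⟨hDz.1, hx⟩, ?_⟩
      ext j
      refine Fin.cases ?_ (fun j => ?_) j
      · simp only [hf, Fin.cons_zero]
        change _ = Real.exp (-ρ (x z))
        rw [← hr]
        simp only [r, neg_neg]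
        exact (Real.exp_log (hDz.2 0).1).symm
      · simp only [hf, Fin.cons_succ]
        exact (sigmoid_iff (hDz.2 _).1 (hDz.2 _).2).2 (g3 j).2

/-- An open toric cube `C = f_A((0,1)^d)` of dimension `k` is semialgebraically
homeomorphic to the open cube `(0,1)^k`: there are mutually inverse continuous maps
between `C` and `(0,1)^k`, whose graph is a semialgebraic set. -/
theorem openToricCube_homeo_openCube {d n k : ℕ} (a : Fin n → Fin d → ℕ)
    (hdim : dimH (monomialMap a '' openUnitCube d) = k) :
    ∃ (f : (Fin n → ℝ) → (Fin k → ℝ)) (g : (Fin k → ℝ) → (Fin n → ℝ)),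
      ContinuousOn f (monomialMap a '' openUnitCube d) ∧
      ContinuousOn g (openUnitCube k) ∧
      f '' (monomialMap a '' openUnitCube d) = openUnitCube k ∧
      g '' openUnitCube k = monomialMap a '' openUnitCube d ∧
      (∀ x ∈ monomialMap a '' openUnitCube d, g (f x) = x) ∧
      (∀ y ∈ openUnitCube k, f (g y) = y) ∧
      IsSemialgebraic {z : (Fin n ⊕ Fin k) → ℝ |
        (fun i => z (Sum.inl i)) ∈ monomialMap a '' openUnitCube d ∧
        (fun j => z (Sum.inr j)) = f (fun i => z (Sum.inl i))} := by
  classical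
  rw [dimH_toricCube] at hdim
  have hk : Module.finrank ℝ (LinearMap.range (toricLin a)) = k := by exact_mod_cast hdim
  rcases k with _ | m
  · exact toric_zero a hk
  · exact toric_succ a hk
end
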